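/- For distinct x,y∈V with ε_x e^{t_x}+ε_y e^{t_y}>0, the Green's function satisfies G^ε_xy = (e^{t_x+t_y}/(ε_x e^{t_x}+ε_y e^{t_y})) · (Σ_{T∈𝒯_xy∪𝒯_yx} Π_{(i∼j)∈T} β_ij e^{t_i+t_j}) / (Σ_{T∈𝒯} Π_{(i∼j)∈T} β_ij e^{t_i+t_j}); the ratio on the right is the conditional probability, given t, that T connects x to y within Γ and attaches x or y to ρ, under the weighted spanning-tree law P_{β,t}(T=S) = Π_{e∈S} β_e(t) / Σ_{S'∈𝒯} Π_{e'∈S'} β_{e'}(t) with β_e(t):=β_ij e^{t_i+t_j} for e=(i∼j). -/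

import Mathlib

/-!
Write `w` for the edge weights of the augmented graph and `Z` for the total weight of its spanning
trees. Let `h_x(a) = forestSum (aug G) w x ρ a` be the total weight of the two-component spanning
forests in which `a` lies in the component of `x`, away from `ρ`. The theorem reduces to the two
identities `(A(t) + ε̂(t)) h_x = Z δ_x` and `Σ_{T ∈ 𝒯_xy} w(T) = w(x ∼ ρ) h_x(y)`.

The first (`laplacian_forestSum`) is proved without determinants. Along an edge `y ∼ v`, the
difference `h_x(y) - h_x(v)` only sees forests having `y` and `v` in different components, and
adding that edge to such a forest gives a spanning tree in which it lies on the path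
from `x` to `ρ`; by basis exchange (`exchange`) this is a bijection (`weight_mul_sub`). Hence the
Laplacian of `h_x` at `y` is a sum over spanning trees `T` of `w(T)` times the divergence at `y` of
the unit flow from `x` to `ρ` along `T`. For `y ≠ ρ` that divergence is `1` if `y = x` and `0`
otherwise, because for each `z ≠ y` exactly one edge of `T` at `y` leads towards `z`
(`existsUnique_branch`).

The second (`sum_Txy`) holds because removing the edge `x ∼ ρ` from a tree of `𝒯_xy` leaves such a
forest. As `h_x(y) = h_y(x)` (`forestSum_symm`), and as no tree of `𝒯_xy` contains the edge
`y ∼ ρ` (it would close a cycle), the sum over `𝒯_xy ∪ 𝒯_yx` is `(w(x ∼ ρ) + w(y ∼ ρ)) h_y(x)`.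
Positivity of `Z` (`partition_pos`) then gives the inverse matrix.
-/

open MeasureTheory Real Filter
open scoped BigOperators

attribute [local instance] Classical.propDecidable

namespace H22

variable {V : Type*} [Fintype V] [DecidableEq V]

/-- The augmented graph `Γ_ρ`: add an extra vertex `ρ` (encoded by `none`)
joined to every vertex of the original graph. -/
def aug (G : SimpleGraph V) : SimpleGraph (Option V) :=
  SimpleGraph.fromRel (fun a b =>
    match a, b with
    | some i, some j => G.Adj i j
    | _, _ => True)

/-- `T` is (the edge set of) a spanning tree of `G`. -/
def IsSpanningTree {α : Type*} (G : SimpleGraph α) (T : Finset (Sym2 α)) : Prop :=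
  ↑T ⊆ G.edgeSet ∧ (SimpleGraph.fromEdgeSet (↑T : Set (Sym2 α))).IsTree

/-- The finset of all spanning trees of `G`. -/
noncomputable def STrees {α : Type*} [Fintype α] [DecidableEq α] (G : SimpleGraph α) :
    Finset (Finset (Sym2 α)) :=
  Finset.univ.filter (fun T => IsSpanningTree G T)

/-- Extension of a vector `t : V → ℝ` to `Option V` by `t_ρ := 0`. -/
def extV (t : V → ℝ) : Option V → ℝ := fun a => Option.elim a 0 t

/-- Lift of a (symmetrized) function of two vertices to unordered pairs. -/
noncomputable def esym {α : Type*} (f : α → α → ℝ) : Sym2 α → ℝ :=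
  Sym2.lift ⟨fun a b => (f a b + f b a) / 2, fun a b => by ring⟩

/-- Combined edge weights on the augmented graph: `β` on edges of `Γ`,
`ε_i` on the edge `i ∼ ρ`. -/
def bres (β : V → V → ℝ) (ε : V → ℝ) : Option V → Option V → ℝ := fun a b =>
  match a, b with
  | some i, some j => β i j
  | some i, none => ε i
  | none, some j => ε j
  | none, none => 0

/-- `B_{ij}(t,s) = cosh(t_i - t_j) + ½ (s_i - s_j)² e^{t_i+t_j}` on the augmented graph. -/
noncomputable def Bfun (t s : V → ℝ) (a b : Option V) : ℝ :=
  Real.cosh (extV t a - extV t b) +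
    (1 / 2) * (extV s a - extV s b) ^ 2 * Real.exp (extV t a + extV t b)

/-- Weight `β_{ij} e^{t_i+t_j}` of an edge of the augmented graph. -/
noncomputable def treeW (β : V → V → ℝ) (ε : V → ℝ) (t : V → ℝ) : Sym2 (Option V) → ℝ :=
  esym (fun a b => bres β ε a b * Real.exp (extV t a + extV t b))

/-- Gibbs factor `e^{-β_{ij}(B_{ij}(t,s)-1)}` of an edge of the augmented graph. -/
noncomputable def gibbs (β : V → V → ℝ) (ε : V → ℝ) (t s : V → ℝ) : Sym2 (Option V) → ℝ :=
  esym (fun a b => Real.exp (-(bres β ε a b * (Bfun t s a b - 1))))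

/-- The density of the measure `μ^ε` with respect to
(Lebesgue on `ℝ^V × ℝ^V`) × (counting measure on spanning trees). -/
noncomputable def dens (G : SimpleGraph V) (β : V → V → ℝ) (ε : V → ℝ)
    (t s : V → ℝ) (T : Finset (Sym2 (Option V))) : ℝ :=
  (∏ j, Real.exp (-t j) / (2 * Real.pi)) *
  (∏ e ∈ Finset.univ.filter (fun e : Sym2 (Option V) => e ∈ (aug G).edgeSet),
      gibbs β ε t s e) *
  (∏ e ∈ T, treeW β ε t e)

/-- Expectation of an observable `f(t,s,T)` under the measure `μ^ε`. -/
noncomputable def expect (G : SimpleGraph V) (β : V → V → ℝ) (ε : V → ℝ)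
    (f : (V → ℝ) → (V → ℝ) → Finset (Sym2 (Option V)) → ℝ) : ℝ :=
  ∑ T ∈ STrees (aug G), ∫ p : (V → ℝ) × (V → ℝ), dens G β ε p.1 p.2 T * f p.1 p.2 T

/-- The weighted graph Laplacian `A(t)` of `Γ`. -/
noncomputable def Amat (G : SimpleGraph V) (β : V → V → ℝ) (t : V → ℝ) : Matrix V V ℝ :=
  Matrix.of fun i j =>
    if i = j then ∑ k ∈ Finset.univ.filter (fun k => G.Adj k j), β k j * Real.exp (t k + t j)
    else if G.Adj i j then -(β i j * Real.exp (t i + t j)) else 0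

/-- The pinning diagonal matrix `ε̂(t) = diag(ε_i e^{t_i})`. -/
noncomputable def epsHat (ε : V → ℝ) (t : V → ℝ) : Matrix V V ℝ :=
  Matrix.diagonal fun i => ε i * Real.exp (t i)

/-- The Green's function `G^ε_{xy} = e^{t_x+t_y} (A(t)+ε̂(t))⁻¹_{xy}`. -/
noncomputable def Gfun (G : SimpleGraph V) (β : V → V → ℝ) (ε : V → ℝ)
    (t : V → ℝ) (x y : V) : ℝ :=
  Real.exp (t x + t y) * (Amat G β t + epsHat ε t)⁻¹ x y

/-- The edge `i ∼ ρ` of the augmented graph. -/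
def rootEdge (i : V) : Sym2 (Option V) := s(some i, none)

/-- The set of roots `R(T) = {i ∈ V : (i ∼ ρ) ∈ T}`. -/
noncomputable def roots (T : Finset (Sym2 (Option V))) : Finset V :=
  Finset.univ.filter fun i => rootEdge i ∈ T

/-- The forest `F(T) = T ∩ E`: edges of `T` not incident to `ρ`. -/
noncomputable def forestOf (T : Finset (Sym2 (Option V))) : Finset (Sym2 (Option V)) :=
  T.filter fun e => ¬ ((none : Option V) ∈ e)

/-- `x ↔_T y`: `x` and `y` are connected in `T` through a path not using `ρ`. -/
def connIn (T : Finset (Sym2 (Option V))) (x y : V) : Prop :=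
  (SimpleGraph.fromEdgeSet (↑(forestOf T) : Set (Sym2 (Option V)))).Reachable (some x) (some y)

/-- The observable `O^π_{xy}`. -/
noncomputable def obs (pv : V → ℝ) (x y : V) (t : V → ℝ)
    (T : Finset (Sym2 (Option V))) : ℝ :=
  Real.exp (t x + t y) / (pv x * Real.exp (t x) + pv y * Real.exp (t y)) *
    (if rootEdge x ∈ T ∧ connIn T x y then 1 else 0)

/-- The pinning `ε = (π_i ε)_{i ∈ V}`. -/
def pinOf (pv : V → ℝ) (ε : ℝ) : V → ℝ := fun i => pv i * ε

/-- The pinning `c δ_x` concentrated at the single vertex `x`. -/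
def singlePin (x : V) (c : ℝ) : V → ℝ := fun i => if i = x then c else 0

end H22

namespace H22

variable {V : Type*} [Fintype V] [DecidableEq V]

/-! ### Trees and edge removal -/

/-- The graph on `α` whose edges are the non-diagonal members of `F`. -/
abbrev gr {α : Type*} (F : Finset (Sym2 α)) : SimpleGraph α :=
  SimpleGraph.fromEdgeSet (↑F : Set (Sym2 α))

lemma gr_insert {α : Type*} [DecidableEq (Sym2 α)] (F : Finset (Sym2 α)) (a b : α) :
    gr (insert s(a, b) F) = gr F ⊔ SimpleGraph.edge a b := by
  ext u v
  simp only [SimpleGraph.fromEdgeSet_adj, SimpleGraph.sup_adj, SimpleGraph.edge_adj,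
    Finset.coe_insert, Set.mem_insert_iff, Sym2.eq_iff]
  tauto

lemma gr_erase {α : Type*} [DecidableEq (Sym2 α)] (F : Finset (Sym2 α)) (e : Sym2 α) :
    gr (F.erase e) = (gr F).deleteEdges {e} := by
  simp only [gr, SimpleGraph.deleteEdges_fromEdgeSet, Finset.coe_erase]

/-- Removing one edge from a connected graph leaves at most two components. -/
lemma reach_or {α : Type*} {H : SimpleGraph α} {c d : α}
    (h : (H ⊔ SimpleGraph.edge c d).Connected) (z : α) : H.Reachable z c ∨ H.Reachable z d := by
  have key : ∀ u v, (H ⊔ SimpleGraph.edge c d).Walk u v →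
      (H.Reachable v c ∨ H.Reachable v d) → H.Reachable u c ∨ H.Reachable u d := by
    intro u v p hv
    induction p with
    | nil => exact hv
    | cons hadj p ih =>
      rw [SimpleGraph.sup_adj, SimpleGraph.edge_adj] at hadj
      rcases hadj with hadj | ⟨⟨rfl, rfl⟩ | ⟨rfl, rfl⟩, -⟩
      · exact (ih hv).imp hadj.reachable.trans hadj.reachable.trans
      · exact Or.inl .rfl
      · exact Or.inr .rfl
  obtain ⟨p⟩ := h.preconnected z c
  exact key z c p (Or.inl .rfl)

/-- Basis exchange: two vertices lying in different halves of a tree with one edge removed may be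
joined instead of the ends of the removed edge. -/
lemma exchange {α : Type*} {H : SimpleGraph α} {a b c d : α}
    (h : (H ⊔ SimpleGraph.edge c d).IsTree) (hab : ¬ H.Reachable a b) :
    (H ⊔ SimpleGraph.edge a b).IsTree := by
  have hne : a ≠ b := fun h => hab (h ▸ .rfl)
  have hle : H ≤ H ⊔ SimpleGraph.edge a b := le_sup_left
  have hadj : (H ⊔ SimpleGraph.edge a b).Reachable a b :=
    SimpleGraph.Adj.reachable (by simp [SimpleGraph.edge_adj, hne])
  refine ⟨?_, (h.isAcyclic.anti le_sup_left).sup_edge_of_not_reachable hab⟩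
  have hR := reach_or h.connected
  have hcd : (H ⊔ SimpleGraph.edge a b).Reachable c d := by
    rcases hR a with ha | ha <;> rcases hR b with hb | hb
    · exact absurd (ha.trans hb.symm) hab
    · exact (ha.symm.mono hle).trans (hadj.trans (hb.mono hle))
    · exact (hb.symm.mono hle).trans (hadj.symm.trans (ha.mono hle))
    · exact absurd (ha.trans hb.symm) hab
  have hc : ∀ z, (H ⊔ SimpleGraph.edge a b).Reachable z c := fun z =>
    (hR z).elim (fun hz => hz.mono hle) (fun hz => (hz.mono hle).trans hcd.symm)
  exact { preconnected := fun u v => (hc u).trans (hc v).symm, nonempty := ⟨a⟩ }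

/-- In a tree, a vertex `z ≠ y` hangs off exactly one of the edges at `y`, namely the first edge of
the path from `y` to `z`. -/
lemma existsUnique_branch {α : Type*} {T : SimpleGraph α} (hT : T.IsTree) {y z : α} (hyz : y ≠ z) :
    ∃! v, T.Adj y v ∧ ¬ (T.deleteEdges {s(y, v)}).Reachable y z := by
  obtain ⟨p, hp, -⟩ := hT.existsUnique_path y z
  cases p with
  | nil => exact absurd rfl hyz
  | @cons _ v _ hadj q =>
    rw [SimpleGraph.Walk.cons_isPath_iff] at hp
    refine ⟨v, ⟨hadj, fun hr => ?_⟩, ?_⟩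
    · have hb := SimpleGraph.isAcyclic_iff_forall_isBridge.1 hT.isAcyclic
        (T.mem_edgeSet.2 hadj)
      rw [SimpleGraph.isBridge_iff] at hb
      refine hb (hr.trans (SimpleGraph.Walk.reachable ?_).symm)
      exact q.toDeleteEdge _ fun he => hp.2 (q.fst_mem_support_of_mem_edges he)
    · rintro v' ⟨-, hnr⟩
      by_contra hne
      refine hnr (SimpleGraph.Walk.reachable
        ((SimpleGraph.Walk.cons hadj q).toDeleteEdge _ fun he => ?_))
      rw [SimpleGraph.Walk.edges_cons, List.mem_cons] at he
      rcases he with he | he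
      · rw [Sym2.eq_iff] at he
        rcases he with ⟨-, h⟩ | ⟨h, h'⟩
        · exact hne h
        · exact hne (h'.trans h)
      · exact hp.2 (q.fst_mem_support_of_mem_edges he)

omit [Fintype V] in
/-- `connIn` ignores the edges at the root; these are unreachable from a vertex that is not
connected to the root. -/
lemma connIn_iff {F : Finset (Sym2 (Option V))} {x y : V}
    (h : ¬ (gr F).Reachable (some x) none) :
    connIn F x y ↔
      (gr F).Reachable (some x) (some y) := by
  constructor
  · intro hr
    exact hr.mono (SimpleGraph.fromEdgeSet_mono fun e he => (Finset.mem_filter.1 he).1)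
  · rintro ⟨p⟩
    refine SimpleGraph.Walk.reachable (p.transfer _ fun e he => ?_)
    have h1 := p.edges_subset_edgeSet he
    rw [SimpleGraph.edgeSet_fromEdgeSet] at h1 ⊢
    refine ⟨?_, h1.2⟩
    refine Finset.mem_filter.2 ⟨h1.1, fun hn => h ?_⟩
    have := SimpleGraph.Walk.mem_support_of_mem_edges he hn
    exact ⟨p.takeUntil _ this⟩

/-! ### Forest sums and the Poisson equation -/

section Forests

variable {α : Type*} [Fintype α] [DecidableEq α] {G : SimpleGraph α}

lemma mem_STrees {T : Finset (Sym2 α)} :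
    T ∈ STrees G ↔ (↑T : Set (Sym2 α)) ⊆ G.edgeSet ∧ (gr T).IsTree := by
  simp only [STrees, Finset.mem_filter, Finset.mem_univ, true_and]
  rfl

lemma not_reachable_erase {T : Finset (Sym2 α)} (hT : T ∈ STrees G) {a b : α}
    (hab : s(a, b) ∈ T) : ¬ (gr (T.erase s(a, b))).Reachable a b := by
  rw [mem_STrees] at hT
  have hG : G.Adj a b := hT.1 hab
  rw [gr_erase, ← SimpleGraph.isBridge_iff]
  exact SimpleGraph.isAcyclic_iff_forall_isBridge.1 hT.2.isAcyclic
    ((SimpleGraph.fromEdgeSet_adj _).2 ⟨hab, hG.ne⟩)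

lemma not_reachable_of_insert {F : Finset (Sym2 α)} {a b : α} (hF : s(a, b) ∉ F)
    (hT : insert s(a, b) F ∈ STrees G) : ¬ (gr F).Reachable a b := by
  have := not_reachable_erase hT (Finset.mem_insert_self _ _)
  rwa [Finset.erase_insert hF] at this

lemma reachable_or_of_insert {F : Finset (Sym2 α)} {a b : α}
    (hT : insert s(a, b) F ∈ STrees G) (z : α) :
    (gr F).Reachable z a ∨ (gr F).Reachable z b := by
  have h := (mem_STrees.1 hT).2
  rw [gr_insert] at h
  exact reach_or h.connected z

lemma insert_mem_STrees {F : Finset (Sym2 α)} {a b c d : α}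
    (hT : insert s(c, d) F ∈ STrees G) (hG : G.Adj a b) (hab : ¬ (gr F).Reachable a b) :
    insert s(a, b) F ∈ STrees G := by
  rw [mem_STrees] at hT ⊢
  rw [gr_insert] at hT ⊢
  refine ⟨?_, exchange hT.2 hab⟩
  rw [Finset.coe_insert, Set.insert_subset_iff] at hT ⊢
  exact ⟨hG, hT.1.2⟩

omit [Fintype α] [DecidableEq α] in
lemma notMem_of_not_reachable {F : Finset (Sym2 α)} {a b : α} (hab : ¬ (gr F).Reachable a b) :
    s(a, b) ∉ F := by
  intro h
  have hne : a ≠ b := fun h => hab (h ▸ .rfl)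
  exact hab (SimpleGraph.Adj.reachable ((SimpleGraph.fromEdgeSet_adj _).2 ⟨h, hne⟩))

/-- The two-component spanning forests of `G` separating `x` from `r`, encoded (when `x` and `r`
are adjacent in `G`) as the spanning trees through the edge `x ∼ r` with that edge removed. -/
noncomputable def cutForests (G : SimpleGraph α) (x r : α) : Finset (Finset (Sym2 α)) :=
  Finset.univ.filter fun F => s(x, r) ∉ F ∧ insert s(x, r) F ∈ STrees G

lemma mem_cutForests {x r : α} {F : Finset (Sym2 α)} :
    F ∈ cutForests G x r ↔ s(x, r) ∉ F ∧ insert s(x, r) F ∈ STrees G := by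
  simp [cutForests]

/-- The total weight of the two-component spanning forests in which `y` lies with `x`, away from
the root `r`. -/
noncomputable def forestSum (G : SimpleGraph α) (w : Sym2 α → ℝ) (x r y : α) : ℝ :=
  ∑ F ∈ cutForests G x r, (∏ e ∈ F, w e) * if (gr F).Reachable x y then 1 else 0

/-- Adding the edge `y ∼ v` to the forests it reconnects turns the gradient of `forestSum` along
that edge into a signed sum over spanning trees through the edge. The sign is `+1` when the edge is
traversed from `y` to `v` on the way from `x` to `r`, and `-1` when it is traversed backwards;
it is written as a difference of indicators of `r`, resp. `x`, lying beyond the edge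
as seen from `y`. -/
lemma weight_mul_sub (w : Sym2 α → ℝ) {x r y v : α} (hxr : G.Adj x r) (hyv : G.Adj y v) :
    w s(y, v) * (forestSum G w x r y - forestSum G w x r v) =
      ∑ T ∈ STrees G with s(y, v) ∈ T, (∏ e ∈ T, w e) *
        ((if ¬ (gr (T.erase s(y, v))).Reachable y r then (1 : ℝ) else 0) -
          if ¬ (gr (T.erase s(y, v))).Reachable y x then 1 else 0) := by
  have hL : w s(y, v) * (forestSum G w x r y - forestSum G w x r v) =
      ∑ F ∈ cutForests G x r with ¬ (gr F).Reachable y v, w s(y, v) * ((∏ e ∈ F, w e) *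
        ((if (gr F).Reachable x y then (1 : ℝ) else 0) -
          if (gr F).Reachable x v then 1 else 0)) := by
    rw [forestSum, forestSum, ← Finset.sum_sub_distrib, Finset.mul_sum, Finset.sum_filter]
    refine Finset.sum_congr rfl fun F _ => ?_
    by_cases h : (gr F).Reachable y v
    · have : (gr F).Reachable x y ↔ (gr F).Reachable x v :=
        ⟨fun h' => h'.trans h, fun h' => h'.trans h.symm⟩
      simp [h, this]
    · simp [h, mul_sub]
  have hR : ∀ T ∈ (STrees G).filter (s(y, v) ∈ ·), (gr (T.erase s(y, v))).Reachable x r →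
      (∏ e ∈ T, w e) * ((if ¬ (gr (T.erase s(y, v))).Reachable y r then (1 : ℝ) else 0) -
          if ¬ (gr (T.erase s(y, v))).Reachable y x then 1 else 0) = 0 := by
    intro T _ h
    have : (gr (T.erase s(y, v))).Reachable y x ↔ (gr (T.erase s(y, v))).Reachable y r :=
      ⟨fun h' => h'.trans h, fun h' => h'.trans h.symm⟩
    simp [this]
  rw [hL, ← Finset.sum_filter_of_ne
    (p := fun T => ¬ (gr (T.erase s(y, v))).Reachable x r) fun T hT hne hr => hne (hR T hT hr)]
  refine Finset.sum_bij' (fun F _ => insert s(y, v) F) (fun T _ => T.erase s(y, v)) ?_ ?_ ?_ ?_ ?_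
  · intro F hF
    simp only [Finset.mem_filter, mem_cutForests] at hF ⊢
    obtain ⟨⟨hx, hT⟩, hn⟩ := hF
    refine ⟨⟨insert_mem_STrees hT hyv hn, Finset.mem_insert_self _ _⟩, ?_⟩
    rw [Finset.erase_insert (notMem_of_not_reachable hn)]
    exact not_reachable_of_insert hx hT
  · intro T hT
    simp only [Finset.mem_filter, mem_cutForests] at hT ⊢
    obtain ⟨⟨hT, he⟩, hn⟩ := hT
    refine ⟨⟨notMem_of_not_reachable hn, ?_⟩, not_reachable_erase hT he⟩
    refine insert_mem_STrees (c := y) (d := v) ?_ hxr hn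
    rwa [Finset.insert_erase he]
  · intro F hF
    simp only [Finset.mem_filter] at hF
    exact Finset.erase_insert (notMem_of_not_reachable hF.2)
  · intro T hT
    simp only [Finset.mem_filter] at hT
    exact Finset.insert_erase hT.1.2
  · intro F hF
    simp only [Finset.mem_filter, mem_cutForests] at hF
    obtain ⟨⟨hx, hT⟩, hn⟩ := hF
    have he := notMem_of_not_reachable hn
    rw [Finset.erase_insert he, Finset.prod_insert he, mul_assoc]
    congr 2
    have hxr' := not_reachable_of_insert hx hT
    have hTy := insert_mem_STrees hT hyv hn
    by_cases hxy : (gr F).Reachable x y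
    · have h1 : ¬ (gr F).Reachable x v := fun h => hn (hxy.symm.trans h)
      have h2 : ¬ (gr F).Reachable y r := fun h => hxr' (hxy.trans h)
      simp [hxy, hxy.symm, h1, h2]
    · have h1 : (gr F).Reachable x v := (reachable_or_of_insert hTy x).resolve_left hxy
      have h2 : (gr F).Reachable y r :=
        (reachable_or_of_insert hT y).resolve_left fun h => hxy h.symm
      have h3 : ¬ (gr F).Reachable y x := fun h => hxy h.symm
      simp [hxy, h1, h2, h3]

/-- Summed form of `existsUnique_branch`: exactly one edge of `T` at `y` separates `y` from
`z ≠ y`. -/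
lemma sum_branch {T : Finset (Sym2 α)} (hT : T ∈ STrees G) (y z : α) :
    ∑ v, (if G.Adj y v ∧ s(y, v) ∈ T then
        (if ¬ (gr (T.erase s(y, v))).Reachable y z then (1 : ℝ) else 0) else 0) =
      if y = z then 0 else 1 := by
  by_cases hyz : y = z
  · subst hyz
    simp
  have hT' := mem_STrees.1 hT
  obtain ⟨v, ⟨hv, hv'⟩, huniq⟩ := existsUnique_branch hT'.2 hyz
  have hadj : ∀ v, (gr T).Adj y v ↔ G.Adj y v ∧ s(y, v) ∈ T := by
    intro v
    rw [SimpleGraph.fromEdgeSet_adj]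
    exact ⟨fun h => ⟨hT'.1 h.1, h.1⟩, fun h => ⟨h.2, h.1.ne⟩⟩
  rw [if_neg hyz, Finset.sum_eq_single v]
  · rw [← gr_erase] at hv'
    rw [if_pos ((hadj v).1 hv), if_pos hv']
  · intro u _ hu
    by_cases h : G.Adj y u ∧ s(y, u) ∈ T
    · rw [if_pos h, if_neg]
      exact fun h' => hu (huniq u ⟨(hadj u).2 h, by rwa [← gr_erase]⟩)
    · rw [if_neg h]
  · simp

/-- `forestSum` solves the Poisson equation with source at `x` and Dirichlet condition at `r`. -/
lemma laplacian_forestSum (w : Sym2 α → ℝ) {x r y : α} (hxr : G.Adj x r) (hyr : y ≠ r) :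
    ∑ v, (if G.Adj y v then w s(y, v) * (forestSum G w x r y - forestSum G w x r v) else 0) =
      if y = x then ∑ T ∈ STrees G, ∏ e ∈ T, w e else 0 := by
  have h1 : ∀ v, (if G.Adj y v then
        w s(y, v) * (forestSum G w x r y - forestSum G w x r v) else 0) =
      ∑ T ∈ STrees G, (∏ e ∈ T, w e) *
        ((if G.Adj y v ∧ s(y, v) ∈ T then
          (if ¬ (gr (T.erase s(y, v))).Reachable y r then (1 : ℝ) else 0) else 0) -
        (if G.Adj y v ∧ s(y, v) ∈ T then
          (if ¬ (gr (T.erase s(y, v))).Reachable y x then (1 : ℝ) else 0) else 0)) := by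
    intro v
    by_cases hyv : G.Adj y v
    · rw [if_pos hyv, weight_mul_sub w hxr hyv, Finset.sum_filter]
      refine Finset.sum_congr rfl fun T _ => ?_
      by_cases he : s(y, v) ∈ T
      · simp only [hyv, he, and_self, if_true]
      · simp only [he, and_false, if_false, sub_zero, mul_zero]
    · simp only [hyv, false_and, if_false, sub_zero, mul_zero, Finset.sum_const_zero]
  simp_rw [h1]
  rw [Finset.sum_comm]
  have h2 : ∀ T ∈ STrees G, ∑ v, (∏ e ∈ T, w e) *
        ((if G.Adj y v ∧ s(y, v) ∈ T then
          (if ¬ (gr (T.erase s(y, v))).Reachable y r then (1 : ℝ) else 0) else 0) -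
        (if G.Adj y v ∧ s(y, v) ∈ T then
          (if ¬ (gr (T.erase s(y, v))).Reachable y x then (1 : ℝ) else 0) else 0)) =
      if y = x then ∏ e ∈ T, w e else 0 := by
    intro T hT
    rw [← Finset.mul_sum, Finset.sum_sub_distrib, sum_branch hT, sum_branch hT, if_neg hyr]
    by_cases h : y = x <;> simp [h]
  rw [Finset.sum_congr rfl h2]
  by_cases h : y = x <;> simp [h]

/-- The spanning trees through `x ∼ r` in which removing that edge leaves `y` with `x` are exactly
the forests counted by `forestSum`, with the edge `x ∼ r` added. -/
lemma sum_trees_eq (w : Sym2 α → ℝ) (x r y : α) :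
    ∑ T ∈ STrees G with s(x, r) ∈ T ∧ (gr (T.erase s(x, r))).Reachable x y, ∏ e ∈ T, w e =
      w s(x, r) * forestSum G w x r y := by
  rw [forestSum, Finset.mul_sum]
  simp_rw [mul_ite, mul_one, mul_zero]
  rw [← Finset.sum_filter]
  refine Finset.sum_bij' (fun T _ => T.erase s(x, r)) (fun F _ => insert s(x, r) F) ?_ ?_ ?_ ?_ ?_
  · intro T hT
    simp only [Finset.mem_filter, mem_cutForests] at hT ⊢
    refine ⟨⟨Finset.notMem_erase _ _, ?_⟩, hT.2.2⟩
    rw [Finset.insert_erase hT.2.1]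
    exact hT.1
  · intro F hF
    simp only [Finset.mem_filter, mem_cutForests] at hF ⊢
    refine ⟨hF.1.2, Finset.mem_insert_self _ _, ?_⟩
    rw [Finset.erase_insert hF.1.1]
    exact hF.2
  · intro T hT
    simp only [Finset.mem_filter] at hT
    exact Finset.insert_erase hT.2.1
  · intro F hF
    simp only [Finset.mem_filter, mem_cutForests] at hF
    exact Finset.erase_insert hF.1.1
  · intro T hT
    simp only [Finset.mem_filter] at hT
    exact (Finset.mul_prod_erase _ _ hT.2.1).symm

/-- The forests counted on both sides are the same: those in which `x` and `y` share the component
that avoids `r`. -/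
lemma forestSum_symm (w : Sym2 α → ℝ) {x y r : α} (hx : G.Adj x r) (hy : G.Adj y r) :
    forestSum G w x r y = forestSum G w y r x := by
  have key : ∀ {a b : α} {F : Finset (Sym2 α)}, G.Adj b r →
      F ∈ cutForests G a r ∧ (gr F).Reachable a b →
      F ∈ cutForests G b r ∧ (gr F).Reachable b a := by
    rintro a b F hb ⟨hF, hab⟩
    rw [mem_cutForests] at hF ⊢
    have hbr : ¬ (gr F).Reachable b r := fun h =>
      not_reachable_of_insert hF.1 hF.2 (hab.trans h)
    exact ⟨⟨notMem_of_not_reachable hbr, insert_mem_STrees hF.2 hb hbr⟩, hab.symm⟩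
  simp_rw [forestSum, mul_ite, mul_one, mul_zero]
  rw [← Finset.sum_filter, ← Finset.sum_filter]
  refine Finset.sum_congr ?_ fun _ _ => rfl
  ext F
  rw [Finset.mem_filter, Finset.mem_filter]
  exact ⟨key hy, key hx⟩

lemma forestSum_root (w : Sym2 α → ℝ) (x r : α) : forestSum G w x r r = 0 := by
  refine Finset.sum_eq_zero fun F hF => ?_
  rw [mem_cutForests] at hF
  rw [if_neg (not_reachable_of_insert hF.1 hF.2), mul_zero]

/-- The partition function is positive as soon as the edges of positive weight connect the
graph. -/
lemma sum_trees_pos (w : Sym2 α → ℝ) (hw : ∀ e ∈ G.edgeSet, 0 ≤ w e) {H : SimpleGraph α}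
    (hHG : H ≤ G) (hH : H.Connected) (hwH : ∀ e ∈ H.edgeSet, 0 < w e) :
    0 < ∑ T ∈ STrees G, ∏ e ∈ T, w e := by
  obtain ⟨T, hTH, hT⟩ := hH.exists_isTree_le
  have hcoe : (↑T.edgeSet.toFinset : Set (Sym2 α)) = T.edgeSet := by simp
  refine Finset.sum_pos' (fun S hS => Finset.prod_nonneg fun e he =>
    hw e ((mem_STrees.1 hS).1 he)) ⟨T.edgeSet.toFinset, ?_, Finset.prod_pos fun e he => ?_⟩
  · rw [mem_STrees, gr, hcoe, SimpleGraph.fromEdgeSet_edgeSet]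
    exact ⟨SimpleGraph.edgeSet_mono (hTH.trans hHG), hT⟩
  · exact hwH e (SimpleGraph.edgeSet_mono hTH (by simpa using he))

end Forests

/-! ### The augmented graph -/

section Root

variable {G : SimpleGraph V}

omit [Fintype V] [DecidableEq V] in
lemma aug_adj_some (i j : V) : (aug G).Adj (some i) (some j) ↔ G.Adj i j := by
  simp only [aug, SimpleGraph.fromRel_adj, ne_eq, Option.some.injEq]
  exact ⟨fun h => h.2.elim id SimpleGraph.Adj.symm, fun h => ⟨h.ne, Or.inl h⟩⟩

omit [Fintype V] [DecidableEq V] in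
lemma aug_adj_none (i : V) : (aug G).Adj (some i) none := by
  simp [aug, SimpleGraph.fromRel_adj]

omit [Fintype V] [DecidableEq V] in
lemma treeW_some {β : V → V → ℝ} (hβ : ∀ i j, β i j = β j i) (ε t : V → ℝ) (i j : V) :
    treeW β ε t s(some i, some j) = β i j * Real.exp (t i + t j) := by
  simp only [treeW, esym, Sym2.lift_mk, bres, extV, Option.elim]
  rw [hβ j i, add_comm (t j)]
  ring

omit [Fintype V] [DecidableEq V] in
lemma treeW_none (β : V → V → ℝ) (ε t : V → ℝ) (i : V) :
    treeW β ε t s(some i, none) = ε i * Real.exp (t i) := by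
  simp only [treeW, esym, Sym2.lift_mk, bres, extV, Option.elim, add_zero, zero_add]
  ring

/-- `A(t) + ε̂(t)` acts as the Dirichlet Laplacian of the augmented graph on functions vanishing at
the root. -/
lemma mulVec_eq {β : V → V → ℝ} (hβ : ∀ i j, β i j = β j i) (ε t : V → ℝ)
    (f : Option V → ℝ) (hf : f none = 0) (y : V) :
    ∑ v, (Amat G β t + epsHat ε t) y v * f (some v) =
      ∑ a, (if (aug G).Adj (some y) a then
        treeW β ε t s(some y, a) * (f (some y) - f a) else 0) := by
  have hA : ∀ v, Amat G β t y v = (if y = v then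
        ∑ k, (if G.Adj y k then β y k * Real.exp (t y + t k) else 0) else 0) -
      if G.Adj y v then β y v * Real.exp (t y + t v) else 0 := by
    intro v
    by_cases hyv : y = v
    · subst hyv
      simp only [Amat, Matrix.of_apply, if_true, SimpleGraph.irrefl, if_false, sub_zero,
        Finset.sum_filter]
      refine Finset.sum_congr rfl fun k _ => ?_
      rw [hβ k y, add_comm (t k)]
      by_cases h : G.Adj y k
      · rw [if_pos h, if_pos h.symm]
      · rw [if_neg h, if_neg fun h' => h h'.symm]
    · simp only [Amat, Matrix.of_apply, if_neg hyv]
      by_cases h : G.Adj y v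
      · rw [if_pos h, if_pos h, zero_sub]
      · rw [if_neg h, if_neg h, sub_zero]
  rw [Fintype.sum_option, if_pos (aug_adj_none y), treeW_none, hf, sub_zero]
  simp_rw [Matrix.add_apply, add_mul, Finset.sum_add_distrib, hA, sub_mul, Finset.sum_sub_distrib,
    ite_mul, zero_mul, Finset.sum_ite_eq, Finset.mem_univ, if_true, aug_adj_some,
    treeW_some hβ, epsHat, Matrix.diagonal_apply, ite_mul, zero_mul, Finset.sum_ite_eq,
    Finset.mem_univ, if_true]
  rw [add_comm, Finset.sum_mul, ← Finset.sum_sub_distrib]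
  congr 1
  refine Finset.sum_congr rfl fun v _ => ?_
  by_cases h : G.Adj y v
  · simp only [if_pos h]
    ring
  · simp only [if_neg h]
    ring

/-- The partition function of the tree law is positive: `Γ` together with a single edge of positive
weight at the root is already connected. -/
lemma partition_pos (hG : G.Connected) {β : V → V → ℝ} (hβsymm : ∀ i j, β i j = β j i)
    (hβpos : ∀ i j, G.Adj i j → 0 < β i j) {ε : V → ℝ} (hε : ∀ i, 0 ≤ ε i)
    (hε' : ∃ i, 0 < ε i) (t : V → ℝ) :
    0 < ∑ T ∈ STrees (aug G), ∏ e ∈ T, treeW β ε t e := by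
  obtain ⟨i, hi⟩ := hε'
  have hpos : ∀ j k, G.Adj j k → 0 < treeW β ε t s(some j, some k) := fun j k h => by
    rw [treeW_some hβsymm]
    exact mul_pos (hβpos j k h) (Real.exp_pos _)
  let H : SimpleGraph (Option V) := G.map some ⊔ SimpleGraph.edge (some i) none
  have hadj : H.Reachable (some i) none :=
    SimpleGraph.Adj.reachable (by simp [H, SimpleGraph.edge_adj])
  have hGH : ∀ j k, G.Adj j k → H.Adj (some j) (some k) := fun j k h =>
    Or.inl ⟨by simpa using h.ne, j, k, h, rfl, rfl⟩
  refine sum_trees_pos _ ?_ (H := H) ?_ ?_ ?_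
  · intro e
    induction e with
    | h a b =>
      rw [SimpleGraph.mem_edgeSet]
      intro h
      rcases a with _ | j <;> rcases b with _ | k
      · exact absurd rfl h.ne
      · rw [Sym2.eq_swap, treeW_none]
        exact mul_nonneg (hε k) (Real.exp_pos _).le
      · rw [treeW_none]
        exact mul_nonneg (hε j) (Real.exp_pos _).le
      · exact (hpos j k ((aug_adj_some j k).1 h)).le
  · refine sup_le ?_ ?_
    · rintro a b ⟨-, j, k, h, rfl, rfl⟩
      exact (aug_adj_some j k).2 h
    · exact (SimpleGraph.edge_le_iff _).2 (Or.inr (aug_adj_none i))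
  · have hr : ∀ a, H.Reachable a (some i) := by
      rintro (_ | j)
      · exact hadj.symm
      · let φ : G →g H := ⟨some, fun {j k} h => hGH j k h⟩
        exact (hG.preconnected j i).map φ
    exact { preconnected := fun a b => (hr a).trans (hr b).symm, nonempty := ⟨none⟩ }
  · intro e
    induction e with
    | h a b =>
      rw [SimpleGraph.mem_edgeSet]
      rintro (⟨-, j, k, h, rfl, rfl⟩ | h)
      · exact hpos j k h
      · have he : s(a, b) = s(some i, none) := by
          rw [SimpleGraph.edge_adj] at h
          exact Sym2.eq_iff.2 (by tauto)
        rw [he, treeW_none]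
        exact mul_pos hi (Real.exp_pos _)

lemma connIn_iff_erase {T : Finset (Sym2 (Option V))} (hT : T ∈ STrees (aug G)) {x y : V}
    (hx : rootEdge x ∈ T) :
    connIn T x y ↔ (gr (T.erase s(some x, none))).Reachable (some x) (some y) := by
  rw [← connIn_iff (not_reachable_erase hT hx)]
  have : forestOf (T.erase s(some x, none)) = forestOf T := by
    ext e
    simp only [forestOf, Finset.mem_filter, Finset.mem_erase]
    refine ⟨fun h => ⟨h.1.2, h.2⟩, fun h => ⟨⟨?_, h.1⟩, h.2⟩⟩
    rintro rfl
    exact h.2 (Sym2.mem_mk_right _ _)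
  simp only [connIn, this]

/-- The total weight of the trees in `𝒯_xy`. -/
lemma sum_Txy (w : Sym2 (Option V) → ℝ) (x y : V) :
    ∑ T ∈ (STrees (aug G)).filter (fun T => rootEdge x ∈ T ∧ connIn T x y), ∏ e ∈ T, w e =
      w s(some x, none) * forestSum (aug G) w (some x) none (some y) := by
  rw [← sum_trees_eq]
  refine Finset.sum_congr (Finset.filter_congr fun T hT => ?_) fun _ _ => rfl
  exact and_congr_right fun hx => connIn_iff_erase hT hx

lemma disjoint_Txy {x y : V} (hxy : x ≠ y) {T : Finset (Sym2 (Option V))}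
    (hT : T ∈ STrees (aug G)) (h : rootEdge x ∈ T ∧ connIn T x y) : rootEdge y ∉ T := by
  intro hy
  have hr := (connIn_iff_erase hT h.1).1 h.2
  refine not_reachable_erase hT h.1 (hr.trans (SimpleGraph.Adj.reachable ?_))
  rw [SimpleGraph.fromEdgeSet_adj]
  refine ⟨Finset.mem_erase.2 ⟨?_, hy⟩, by simp⟩
  simp [hxy.symm]

end Root

end H22

namespace H22

/-- for distinct `x, y ∈ V` with `ε_x e^{t_x} + ε_y e^{t_y} > 0`,
the Green's function satisfies
`G^ε_{xy} = (e^{t_x+t_y}/(ε_x e^{t_x}+ε_y e^{t_y})) ·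
  (Σ_{T ∈ 𝒯_xy ∪ 𝒯_yx} Π_{(i∼j)∈T} β_ij e^{t_i+t_j}) / (Σ_{T∈𝒯} Π_{(i∼j)∈T} β_ij e^{t_i+t_j})`;
the ratio on the right is the probability, under the weighted spanning-tree law given `t`,
that `T` connects `x` to `y` within `Γ` and attaches `x` or `y` to `ρ`. -/
theorem stmt_4 {V : Type*} [Fintype V] [DecidableEq V]
    (G : SimpleGraph V) (hG : G.Connected)
    (β : V → V → ℝ) (hβsymm : ∀ i j, β i j = β j i)
    (hβpos : ∀ i j, G.Adj i j → 0 < β i j)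
    (ε : V → ℝ) (hε : ∀ i, 0 ≤ ε i) (hε' : ∃ i, 0 < ε i)
    (x y : V) (hxy : x ≠ y) (t : V → ℝ)
    (hpos : 0 < ε x * Real.exp (t x) + ε y * Real.exp (t y)) :
    Gfun G β ε t x y
      = Real.exp (t x + t y) / (ε x * Real.exp (t x) + ε y * Real.exp (t y)) *
        ((∑ T ∈ (STrees (aug G)).filter
              (fun T => (rootEdge x ∈ T ∧ connIn T x y) ∨ (rootEdge y ∈ T ∧ connIn T y x)),
            ∏ e ∈ T, treeW β ε t e)
          / (∑ T ∈ STrees (aug G), ∏ e ∈ T, treeW β ε t e)) := by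
  set w := treeW β ε t with hw
  set Z := ∑ T ∈ STrees (aug G), ∏ e ∈ T, w e with hZ
  have hZpos : 0 < Z := partition_pos hG hβsymm hβpos hε hε' t
  have hinv : (Amat G β t + epsHat ε t)⁻¹ =
      Matrix.of fun u v => forestSum (aug G) w (some v) none (some u) / Z := by
    refine Matrix.inv_eq_right_inv ?_
    ext u v
    have h := (mulVec_eq hβsymm ε t (fun a => forestSum (aug G) w (some v) none a)
      (forestSum_root w _ _) u).trans
        (laplacian_forestSum w (aug_adj_none (G := G) v) (y := some u) (by simp))
    simp only [Matrix.mul_apply, Matrix.of_apply, ← mul_div_assoc]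
    rw [← Finset.sum_div, h, Matrix.one_apply]
    by_cases huv : u = v
    · simp only [huv, if_true, ← hZ]
      exact div_self hZpos.ne'
    · simp [huv]
  have hnum : ∑ T ∈ (STrees (aug G)).filter
        (fun T => (rootEdge x ∈ T ∧ connIn T x y) ∨ (rootEdge y ∈ T ∧ connIn T y x)),
        ∏ e ∈ T, w e =
      (ε x * Real.exp (t x) + ε y * Real.exp (t y)) *
        forestSum (aug G) w (some y) none (some x) := by
    rw [Finset.filter_or, Finset.sum_union, sum_Txy, sum_Txy,
      forestSum_symm w (aug_adj_none x) (aug_adj_none y), hw, treeW_none, treeW_none, add_mul]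
    exact Finset.disjoint_filter.2 fun T hT h h' => disjoint_Txy hxy hT h h'.1
  rw [hnum, Gfun, hinv, Matrix.of_apply]
  field_simp

end H22
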